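/- Let k ≥ 3, d ≥ 2 with (d-1) | (k-2), and n = 2k - 2 + (k-2)/(d-1). Partition {k+1, ..., n} into d equal parts A_1, ..., A_d and set B_i = {2, ..., k} ∪ A_i. Let F consist of all k-element subsets of [n] containing the element 1, together with B_1, ..., B_d. Then F is intersecting, any two distinct members of F intersect in at most k-1 elements, every member has size between k and s = k - 1 + (k-2)/(d-1), and |F| = C(n-1, k-1) + d > C(n-1, k-1). -/

import Mathlib

open Finset

theorem stmt_19 (k d n : ℕ) (hk : 3 ≤ k) (hd : 2 ≤ d)
    (hdvd : (d - 1) ∣ (k - 2)) (hn : n = 2 * k - 2 + (k - 2) / (d - 1))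
    (A : Fin d → Finset ℕ)
    (hdisj : ∀ i j : Fin d, i ≠ j → Disjoint (A i) (A j))
    (hunion : (Finset.univ : Finset (Fin d)).biUnion A = Finset.Icc (k + 1) n)
    (hcard : ∀ i : Fin d, (A i).card = (n - k) / d)
    (B : Fin d → Finset ℕ) (hB : ∀ i, B i = Finset.Icc 2 k ∪ A i)
    (F : Finset (Finset ℕ))
    (hFdef : F = ((Finset.Icc 1 n).powersetCard k).filter (fun S => 1 ∈ S) ∪
      Finset.image B Finset.univ) :
    (∀ X ∈ F, ∀ Y ∈ F, X ≠ Y →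
      (X ∩ Y).Nonempty ∧ (X ∩ Y).card ≤ k - 1) ∧
    (∀ X ∈ F, k ≤ X.card ∧ X.card ≤ k - 1 + (k - 2) / (d - 1)) ∧
    F.card = Nat.choose (n - 1) (k - 1) + d ∧
    F.card > Nat.choose (n - 1) (k - 1) := by
  obtain ⟨q, hq⟩ := hdvd
  have hd1 : 0 < d - 1 := by omega
  have hqd : (k - 2) / (d - 1) = q := by
    rw [hq]; exact Nat.mul_div_cancel_left q hd1
  rw [hqd] at hn ⊢
  have hq1 : 1 ≤ q := by
    rcases Nat.eq_zero_or_pos q with h | h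
    · subst h
      simp at hq
      omega
    · exact h
  have hnk : n - k = d * q := by
    obtain ⟨e, rfl⟩ : ∃ e, d = e + 1 := ⟨d - 1, by omega⟩
    simp only [Nat.add_sub_cancel] at hq
    rw [Nat.add_mul, ← hq]
    omega
  have hA : ∀ i, (A i).card = q := by
    intro i
    rw [hcard i, hnk]
    exact Nat.mul_div_cancel_left q (by omega)
  have hAsub : ∀ i, A i ⊆ Finset.Icc (k + 1) n := by
    intro i
    rw [← hunion]
    exact Finset.subset_biUnion_of_mem A (Finset.mem_univ i)
  have hdA : ∀ i, Disjoint (Finset.Icc 2 k) (A i) := by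
    intro i
    rw [Finset.disjoint_left]
    intro x hx hxA
    have := hAsub i hxA
    rw [Finset.mem_Icc] at hx this
    omega
  have hBcard : ∀ i, (B i).card = k - 1 + q := by
    intro i
    rw [hB i, Finset.card_union_of_disjoint (hdA i), hA i, Nat.card_Icc]
    omega
  have h1B : ∀ i, 1 ∉ B i := by
    intro i h
    rw [hB i, Finset.mem_union] at h
    rcases h with h | h
    · simp at h
    · have := hAsub i h
      rw [Finset.mem_Icc] at this
      omega
  have hBsub : ∀ i, B i ⊆ Finset.Icc 1 n := by
    intro i x hx
    rw [hB i, Finset.mem_union] at hx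
    rw [Finset.mem_Icc]
    rcases hx with h | h
    · rw [Finset.mem_Icc] at h
      omega
    · have := hAsub i h
      rw [Finset.mem_Icc] at this
      omega
  have hBB : ∀ i j, i ≠ j → B i ∩ B j = Finset.Icc 2 k := by
    intro i j hij
    rw [hB i, hB j, ← Finset.union_inter_distrib_left,
      Finset.disjoint_iff_inter_eq_empty.mp (hdisj i j hij), Finset.union_empty]
  have hSB : ∀ S : Finset ℕ, S ⊆ Finset.Icc 1 n → S.card = k → 1 ∈ S → ∀ i,
      (S ∩ B i).Nonempty ∧ (S ∩ B i).card ≤ k - 1 := by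
    intro S hS hSk h1 i
    constructor
    · by_contra hne
      rw [Finset.not_nonempty_iff_eq_empty, ← Finset.disjoint_iff_inter_eq_empty] at hne
      have h := Finset.card_le_card (Finset.union_subset hS (hBsub i))
      rw [Finset.card_union_of_disjoint hne, hSk, hBcard i, Nat.card_Icc] at h
      omega
    · have h : S ∩ B i ⊂ S := by
        refine Finset.ssubset_iff_subset_ne.mpr ⟨Finset.inter_subset_left, fun he => ?_⟩
        rw [← he] at h1
        exact h1B i (Finset.mem_inter.mp h1).2
      have := Finset.card_lt_card h
      omega
  have hmem : ∀ X ∈ F, (X ⊆ Finset.Icc 1 n ∧ X.card = k ∧ 1 ∈ X) ∨ ∃ i, B i = X := by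
    intro X hX
    rw [hFdef, Finset.mem_union] at hX
    rcases hX with h | h
    · rw [Finset.mem_filter, Finset.mem_powersetCard] at h
      exact Or.inl ⟨h.1.1, h.1.2, h.2⟩
    · simpa using Or.inr (by simpa using h)
  have hBinj : Function.Injective B := by
    intro i j hij
    by_contra hne
    have h := hBB i j hne
    rw [← hij, Finset.inter_self] at h
    have h2 := hBcard i
    rw [h, Nat.card_Icc] at h2
    omega
  have hstar : (((Finset.Icc 1 n).powersetCard k).filter (fun S => 1 ∈ S)).card
      = Nat.choose (n - 1) (k - 1) := by
    have : ((Finset.Icc 1 n).powersetCard k).filter (fun S => 1 ∈ S)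
        = ((Finset.Icc 2 n).powersetCard (k - 1)).image (insert 1) := by
      ext S
      simp only [Finset.mem_filter, Finset.mem_powersetCard, Finset.mem_image]
      constructor
      · rintro ⟨⟨hs, hc⟩, h1⟩
        refine ⟨S.erase 1, ⟨?_, ?_⟩, Finset.insert_erase h1⟩
        · intro x hx
          rw [Finset.mem_erase] at hx
          have := hs hx.2
          rw [Finset.mem_Icc] at this ⊢
          omega
        · rw [Finset.card_erase_of_mem h1, hc]
      · rintro ⟨T, ⟨hs, hc⟩, rfl⟩
        have h1 : 1 ∉ T := fun h => by simpa using hs h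
        refine ⟨⟨?_, ?_⟩, Finset.mem_insert_self _ _⟩
        · intro x hx
          rw [Finset.mem_insert] at hx
          rw [Finset.mem_Icc]
          rcases hx with h | h
          · omega
          · have := hs h
            rw [Finset.mem_Icc] at this
            omega
        · rw [Finset.card_insert_of_notMem h1, hc]
          omega
    rw [this, Finset.card_image_of_injOn, Finset.card_powersetCard, Nat.card_Icc]
    · rfl
    · intro T hT U hU h
      have hT' := (Finset.mem_powersetCard.mp (Finset.mem_coe.mp hT)).1
      have hU' := (Finset.mem_powersetCard.mp (Finset.mem_coe.mp hU)).1
      have h1 : 1 ∉ T := fun h => by simpa using hT' h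
      have h2 : 1 ∉ U := fun h => by simpa using hU' h
      rw [← Finset.erase_insert h1, ← Finset.erase_insert h2]
      exact congrArg (fun s => Finset.erase s 1) h
  have hFc : F.card = Nat.choose (n - 1) (k - 1) + d := by
    rw [hFdef, Finset.card_union_of_disjoint, hstar, Finset.card_image_of_injective _ hBinj,
      Finset.card_univ, Fintype.card_fin]
    rw [Finset.disjoint_left]
    intro X hX hX'
    obtain ⟨i, -, rfl⟩ := Finset.mem_image.mp hX'
    exact h1B i (Finset.mem_filter.mp hX).2
  refine ⟨?_, ?_, hFc, by omega⟩
  · intro X hX Y hY hne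
    rcases hmem X hX with ⟨hs, hc, h1⟩ | ⟨i, rfl⟩
    · rcases hmem Y hY with ⟨hs', hc', h1'⟩ | ⟨j, rfl⟩
      · refine ⟨⟨1, Finset.mem_inter.mpr ⟨h1, h1'⟩⟩, ?_⟩
        have h : X ∩ Y ⊂ X := by
          refine Finset.ssubset_iff_subset_ne.mpr ⟨Finset.inter_subset_left, fun he => ?_⟩
          exact hne (Finset.eq_of_subset_of_card_le (Finset.inter_eq_left.mp he) (by omega))
        have := Finset.card_lt_card h
        omega
      · exact hSB X hs hc h1 j
    · rcases hmem Y hY with ⟨hs', hc', h1'⟩ | ⟨j, rfl⟩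
      · rw [Finset.inter_comm]
        exact hSB Y hs' hc' h1' i
      · have hij : i ≠ j := fun h => hne (by rw [h])
        rw [hBB i j hij, Nat.card_Icc]
        exact ⟨⟨2, Finset.mem_Icc.mpr (by omega)⟩, by omega⟩
  · intro X hX
    rcases hmem X hX with ⟨hs, hc, h1⟩ | ⟨i, rfl⟩
    · omega
    · rw [hBcard i]
      omega
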